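/- arXiv:1603.06228 — 2 statements merged into one kernel-verified Lean document; each statement's English description precedes it below -/
import Mathlib

section
/- Let f be nilpotent on V over any field, and let d(r) denote the number of Jordan blocks of f of size r. If at most one Ulm invariant d(i) equals 1, then every characteristic subspace of V is hyperinvariant. -/
open LinearMap

variable {K : Type*} [Field K] {V : Type*} [AddCommGroup V] [Module K V]

/-- `X` is hyperinvariant for `f`: invariant under every endomorphism commuting with `f`. -/
def Hinv (f : V →ₗ[K] V) (X : Submodule K V) : Prop :=
  ∀ g : V →ₗ[K] V, g ∘ₗ f = f ∘ₗ g → X.map g ≤ X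

/-- `X` is characteristic for `f`: `f`-invariant and fixed by every automorphism commuting with `f`. -/
def Chinv (f : V →ₗ[K] V) (X : Submodule K V) : Prop :=
  X.map f ≤ X ∧
    ∀ α : V ≃ₗ[K] V, (α : V →ₗ[K] V) ∘ₗ f = f ∘ₗ (α : V →ₗ[K] V) →
      X.map (α : V →ₗ[K] V) = X

/-- The cyclic subspace generated by `x`. -/
def cyc (f : V →ₗ[K] V) (x : V) : Submodule K V :=
  Submodule.span K (Set.range fun i : ℕ => (f ^ i) x)

/-- `x` has exponent `ℓ`. -/
def ExpEq (f : V →ₗ[K] V) (x : V) (ℓ : ℕ) : Prop :=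
  (f ^ ℓ) x = 0 ∧ ∀ j < ℓ, (f ^ j) x ≠ 0

/-- `x` has height `q`. -/
def HeightEq (f : V →ₗ[K] V) (x : V) (q : ℕ) : Prop :=
  x ∈ LinearMap.range (f ^ q) ∧ x ∉ LinearMap.range (f ^ (q + 1))

/-- The `r`-th Ulm invariant: number of Jordan blocks of size `r` (for `r ≥ 1`). -/
noncomputable def ulm (f : V →ₗ[K] V) (r : ℕ) : ℕ :=
  Module.finrank K ↥(LinearMap.ker f ⊓ LinearMap.range (f ^ (r - 1))) -
    Module.finrank K ↥(LinearMap.ker f ⊓ LinearMap.range (f ^ r))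

/-- `u` is a generator tuple with exponents `t`. -/
def IsGenTuple {k : ℕ} (f : V →ₗ[K] V) (u : Fin k → V) (t : Fin k → ℕ) : Prop :=
  (∀ i, ExpEq f (u i) (t i)) ∧ DirectSum.IsInternal (fun i => cyc f (u i))

/-- The summand `⟨U_a⟩` of all cyclic subspaces whose generator has exponent `a`. -/
def subU {k : ℕ} (f : V →ₗ[K] V) (u : Fin k → V) (t : Fin k → ℕ) (a : ℕ) : Submodule K V :=
  ⨆ i ∈ {i : Fin k | t i = a}, cyc f (u i)

open Polynomial
open scoped Finset

/-!
View `V` as a `K[X]`-module with `X` acting as `f`, so that maps commuting with `f` are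
`K[X]`-linear. It is enough that every endomorphism lies in the algebra generated by the
automorphisms. Write `V` as a product of Jordan blocks `K[X] / (X ^ k i)`, with projections `e i`.
If `i ≠ j`, then `e i * a * e j` squares to zero and so differs from the automorphism
`1 + e i * a * e j` by `1`. If another block is isomorphic to the `i`-th one, then `e i` factors
through it and is a product of two such off-diagonal maps. At most one nonzero block is unrepeated,
and its projection is `1` minus the sum of the others. Finally `e i * a * e i` is a scalar multiple
of `e i`, because blocks are cyclic.

The Ulm invariants count blocks because `ker f ⊓ range (f ^ m)` has dimension
`rank (f ^ m) - rank (f ^ (m + 1))`, and `f ^ m` has rank `∑ i, (k i - m)`.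
-/

theorem pow_dvd_pow_mul_iff {α : Type*} [CommMonoidWithZero α] [IsCancelMulZero α] {a : α}
    (ha : a ≠ 0) (m n : ℕ) (b : α) : a ^ n ∣ a ^ m * b ↔ a ^ (n - m) ∣ b := by
  obtain hmn | hnm := le_total m n
  · rw [← Nat.add_sub_of_le hmn, Nat.add_sub_cancel_left, pow_add,
      mul_dvd_mul_iff_left (pow_ne_zero m ha)]
  · simp only [Nat.sub_eq_zero_of_le hnm, pow_zero, one_dvd, iff_true]
    exact (pow_dvd_pow a hnm).mul_right b

section UnitSubalgebra

variable (R : Type*) [CommRing R] (A : Type*) [Ring A] [Algebra R A]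

/-- The subalgebra generated by the units of `A`. For `A` the endomorphism algebra of a module, its
elements preserve every submodule that all automorphisms preserve. -/
def unitSubalgebra : Subalgebra R A :=
  Algebra.adjoin R {a | IsUnit a}

variable {R A}

theorem isUnit_mem_unitSubalgebra {a : A} (ha : IsUnit a) : a ∈ unitSubalgebra R A :=
  Algebra.subset_adjoin ha

theorem isNilpotent_mem_unitSubalgebra {a : A} (ha : IsNilpotent a) : a ∈ unitSubalgebra R A := by
  simpa only [add_sub_cancel_left] using
    sub_mem (isUnit_mem_unitSubalgebra ha.isUnit_one_add) (one_mem (unitSubalgebra R A))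

theorem unitSubalgebra_eq_top_of_algEquiv {B : Type*} [Ring B] [Algebra R B] (φ : A ≃ₐ[R] B)
    (hA : unitSubalgebra R A = ⊤) : unitSubalgebra R B = ⊤ := by
  have hle : unitSubalgebra R A ≤ (unitSubalgebra R B).comap (φ : A →ₐ[R] B) :=
    Algebra.adjoin_le fun _ ha => isUnit_mem_unitSubalgebra (ha.map φ)
  refine Algebra.eq_top_iff.2 fun b => ?_
  have hb : φ (φ.symm b) ∈ unitSubalgebra R B := hle (hA ▸ Algebra.mem_top)
  rwa [φ.apply_symm_apply] at hb

variable {ι : Type*} {e : ι → A}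

theorem offDiagonal_mem_unitSubalgebra (he : OrthogonalIdempotents e) {i j : ι} (hij : i ≠ j)
    (a : A) : e i * a * e j ∈ unitSubalgebra R A := by
  refine isNilpotent_mem_unitSubalgebra ⟨2, ?_⟩
  calc (e i * a * e j) ^ 2 = e i * a * (e j * e i) * a * e j := by noncomm_ring
    _ = 0 := by rw [he.ortho hij.symm]; simp only [mul_zero, zero_mul]

theorem idempotent_mem_unitSubalgebra_of_factor (he : OrthogonalIdempotents e) {i j : ι}
    (hij : i ≠ j) {a b : A} (hab : e i * a * e j * b * e i = e i) :
    e i ∈ unitSubalgebra R A := by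
  have hprod : (e i * a * e j) * (e j * b * e i) = e i := by
    calc (e i * a * e j) * (e j * b * e i) = e i * a * (e j * e j) * b * e i := by noncomm_ring
      _ = e i := by rw [he.idem j, hab]
  rw [← hprod]
  exact mul_mem (offDiagonal_mem_unitSubalgebra he hij a)
    (offDiagonal_mem_unitSubalgebra he hij.symm b)

variable [Fintype ι]

theorem idempotent_mem_of_subsingleton_notMem (he : CompleteOrthogonalIdempotents e)
    (S : Subalgebra R A) (hS : {i | e i ∉ S}.Subsingleton) (i : ι) : e i ∈ S := by
  classical
  by_contra hi
  have hothers : ∀ j ∈ Finset.univ.erase i, e j ∈ S := fun j hj =>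
    not_not.1 fun hj' => Finset.ne_of_mem_erase hj (hS hj' hi)
  have hsum : e i = 1 - ∑ j ∈ Finset.univ.erase i, e j := by
    rw [← he.complete, ← Finset.add_sum_erase _ e (Finset.mem_univ i), add_sub_cancel_right]
  exact hi (hsum ▸ sub_mem (one_mem S) (sum_mem hothers))

theorem unitSubalgebra_eq_top (he : CompleteOrthogonalIdempotents e)
    (hscalar : ∀ i a, ∃ r : R, e i * a * e i = r • e i)
    (hmem : {i | e i ∉ unitSubalgebra R A}.Subsingleton) : unitSubalgebra R A = ⊤ := by
  refine Algebra.eq_top_iff.2 fun a => ?_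
  have hpeirce : a = ∑ i, ∑ j, e i * a * e j := by
    simp only [← Finset.mul_sum, ← Finset.sum_mul, he.complete, one_mul, mul_one]
  rw [hpeirce]
  refine sum_mem fun i _ => sum_mem fun j _ => ?_
  obtain rfl | hij := eq_or_ne i j
  · obtain ⟨r, hr⟩ := hscalar i a
    exact hr ▸ Subalgebra.smul_mem _ (idempotent_mem_of_subsingleton_notMem he _ hmem i) r
  · exact offDiagonal_mem_unitSubalgebra he.toOrthogonalIdempotents hij a

end UnitSubalgebra

section ProductModule

variable {R : Type*} [CommRing R]

theorem isFullyInvariant_of_unitSubalgebra_eq_top {M : Type*} [AddCommGroup M] [Module R M]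
    (hM : unitSubalgebra R (Module.End R M) = ⊤) {S : Submodule R M}
    (hS : ∀ α : M ≃ₗ[R] M, S ≤ S.comap (α : M →ₗ[R] M)) : S.IsFullyInvariant := by
  intro g
  have hg : g ∈ unitSubalgebra R (Module.End R M) := hM ▸ Algebra.mem_top
  induction hg using Algebra.adjoin_induction with
  | mem a ha => exact hS (LinearEquiv.ofBijective a ((Module.End.isUnit_iff a).1 ha))
  | algebraMap r => exact fun x hx => S.smul_mem r hx
  | add _ _ _ _ ha hb => exact fun x hx => S.add_mem (ha hx) (hb hx)
  | mul _ _ _ _ ha hb => exact fun x hx => ha (hb hx)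

theorem exists_eq_smul_one_of_end_quotient (I : Submodule R R) (g : Module.End R (R ⧸ I)) :
    ∃ r : R, g = r • 1 := by
  obtain ⟨r, hr⟩ := Submodule.Quotient.mk_surjective I (g (Submodule.Quotient.mk 1))
  refine ⟨r, Submodule.linearMap_qext I (LinearMap.ext_ring ?_)⟩
  change g (Submodule.Quotient.mk 1) = r • Submodule.Quotient.mk 1
  rw [← hr, ← Submodule.Quotient.mk_smul, smul_eq_mul, mul_one]

variable {ι : Type*} {M : ι → Type*} [∀ i, AddCommGroup (M i)] [∀ i, Module R (M i)]

section PiIdempotent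

variable [DecidableEq ι]

variable (R M) in
/-- The projection of a product of modules onto its `i`-th factor, as an endomorphism of the
product; these are the idempotents of the Peirce decomposition. -/
def piIdempotent (i : ι) : Module.End R (∀ i, M i) :=
  LinearMap.single R M i ∘ₗ LinearMap.proj i

theorem piIdempotent_apply (i : ι) (x : ∀ i, M i) : piIdempotent R M i x = Pi.single i (x i) :=
  rfl

theorem orthogonalIdempotents_piIdempotent : OrthogonalIdempotents (piIdempotent R M) where
  idem i := LinearMap.ext fun x => by simp [piIdempotent_apply]
  ortho i j hij := LinearMap.ext fun x => by simp [piIdempotent_apply, hij]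

theorem completeOrthogonalIdempotents_piIdempotent [Fintype ι] :
    CompleteOrthogonalIdempotents (piIdempotent R M) where
  toOrthogonalIdempotents := orthogonalIdempotents_piIdempotent
  complete := LinearMap.ext fun x => by simp [piIdempotent_apply, Finset.univ_sum_single]

theorem piIdempotent_mul_mul_piIdempotent {i : ι}
    (hi : ∀ g : Module.End R (M i), ∃ r : R, g = r • 1) (a : Module.End R (∀ i, M i)) :
    ∃ r : R, piIdempotent R M i * a * piIdempotent R M i = r • piIdempotent R M i := by
  obtain ⟨r, hr⟩ := hi (LinearMap.proj i ∘ₗ a ∘ₗ LinearMap.single R M i)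
  refine ⟨r, LinearMap.ext fun x => ?_⟩
  have hx := LinearMap.congr_fun hr (x i)
  simp only [LinearMap.comp_apply, LinearMap.proj_apply, LinearMap.coe_single,
    LinearMap.smul_apply, Module.End.one_apply] at hx
  simp [piIdempotent_apply, hx, Pi.single_smul]

theorem piIdempotent_mem_unitSubalgebra {i j : ι} (hij : i ≠ j) (φ : M i ≃ₗ[R] M j) :
    piIdempotent R M i ∈ unitSubalgebra R (Module.End R (∀ i, M i)) := by
  refine idempotent_mem_unitSubalgebra_of_factor orthogonalIdempotents_piIdempotent hij
    (a := LinearMap.single R M i ∘ₗ φ.symm.toLinearMap ∘ₗ LinearMap.proj j)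
    (b := LinearMap.single R M j ∘ₗ φ.toLinearMap ∘ₗ LinearMap.proj i) (LinearMap.ext fun x => ?_)
  simp [piIdempotent_apply]

end PiIdempotent

theorem unitSubalgebra_end_pi_eq_top [Finite ι]
    (hscalar : ∀ i, ∀ g : Module.End R (M i), ∃ r : R, g = r • 1)
    (hiso : {i | Nontrivial (M i) ∧ ∀ j ≠ i, IsEmpty (M i ≃ₗ[R] M j)}.Subsingleton) :
    unitSubalgebra R (Module.End R (∀ i, M i)) = ⊤ := by
  classical
  have := Fintype.ofFinite ι
  refine unitSubalgebra_eq_top completeOrthogonalIdempotents_piIdempotent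
    (fun i => piIdempotent_mul_mul_piIdempotent (hscalar i)) (hiso.anti fun i hi => ⟨?_, ?_⟩)
  · by_contra htriv
    rw [not_nontrivial_iff_subsingleton] at htriv
    have hzero : piIdempotent R M i = 0 := LinearMap.ext fun x => by
      simp [piIdempotent_apply, Subsingleton.elim (x i) 0]
    exact hi (hzero ▸ zero_mem _)
  · exact fun j hj => ⟨fun φ => hi (piIdempotent_mem_unitSubalgebra hj.symm φ)⟩

end ProductModule

section Nilpotent

variable (K) in
/-- The `K[X]`-module `K[X] / (X ^ n)`, on which `X` acts as one nilpotent Jordan block of size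
`n`. The degenerate block of size `0` is the zero module. -/
abbrev JordanBlock (n : ℕ) : Type _ :=
  K[X] ⧸ Submodule.span K[X] {(X : K[X]) ^ n}

theorem finrank_jordanBlock (n : ℕ) : Module.finrank K (JordanBlock K n) = n :=
  (finrank_quotient_span_eq_natDegree (K := K) (f := X ^ n)).trans (natDegree_X_pow n)

theorem ne_zero_of_nontrivial_jordanBlock {n : ℕ} (hn : Nontrivial (JordanBlock K n)) : n ≠ 0 := by
  rintro rfl
  refine Submodule.Quotient.nontrivial_iff.1 hn ?_
  rw [pow_zero]
  exact Ideal.span_singleton_one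

instance finite_jordanBlock (n : ℕ) : Module.Finite K (JordanBlock K n) :=
  (monic_X_pow n).finite_quotient

theorem X_pow_smul_mk_jordanBlock_eq_zero_iff {m n : ℕ} {p : K[X]} :
    (X : K[X]) ^ m • (Submodule.Quotient.mk p : JordanBlock K n) = 0 ↔
      p ∈ Submodule.span K[X] {(X : K[X]) ^ (n - m)} := by
  rw [← Submodule.Quotient.mk_smul, Submodule.Quotient.mk_eq_zero]
  change _ ∈ Ideal.span _ ↔ _ ∈ Ideal.span _
  rw [Ideal.mem_span_singleton, Ideal.mem_span_singleton, smul_eq_mul,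
    pow_dvd_pow_mul_iff X_ne_zero]

theorem exists_linearEquiv_pi_jordanBlock [FiniteDimensional K V] {f : V →ₗ[K] V}
    (hf : IsNilpotent f) :
    ∃ (d : ℕ) (k : Fin d → ℕ), Nonempty (Module.AEval' f ≃ₗ[K[X]] ∀ i, JordanBlock K (k i)) := by
  obtain ⟨n, hn⟩ := hf
  have htor : Module.IsTorsion' (Module.AEval' f) (Submonoid.powers (X : K[X])) := by
    refine (Submodule.isTorsion'_powers_iff _).2 fun x => ⟨n, ?_⟩
    obtain ⟨v, rfl⟩ := (Module.AEval'.of f).surjective x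
    rw [Module.AEval'.X_pow_smul_of, hn, zero_smul, map_zero]
  obtain ⟨d, k, ⟨e⟩⟩ := Module.torsion_by_prime_power_decomposition irreducible_X htor
  exact ⟨d, k, ⟨e.trans (DirectSum.linearEquivFunOnFintype K[X] (Fin d) _)⟩⟩

theorem finrank_ker_inf_add_finrank_map {V₂ : Type*} [AddCommGroup V₂] [Module K V₂]
    (f : V →ₗ[K] V₂) (p : Submodule K V) [FiniteDimensional K p] :
    Module.finrank K ↥(ker f ⊓ p) + Module.finrank K (p.map f) = Module.finrank K p := by
  have h := (f.domRestrict p).finrank_range_add_finrank_ker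
  rw [range_domRestrict, ker_domRestrict] at h
  rw [← h, add_comm, inf_comm, ← Submodule.finrank_map_subtype_eq, Submodule.map_comap_subtype]

variable {ι : Type*} {k : ι → ℕ}

theorem finrank_range_pow [Fintype ι] {f : V →ₗ[K] V}
    (e : Module.AEval' f ≃ₗ[K[X]] ∀ i, JordanBlock K (k i)) (m : ℕ) :
    Module.finrank K (range (f ^ m)) = ∑ i, (k i - m) := by
  classical
  let mk : (ι → K[X]) →ₗ[K[X]] ∀ i, JordanBlock K (k i) :=
    LinearMap.piMap fun i => Submodule.mkQ _
  let π : (ι → K[X]) →ₗ[K] V :=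
    (Module.AEval'.of f).symm.toLinearMap ∘ₗ (e.symm.toLinearMap ∘ₗ mk).restrictScalars K
  have hπ : Function.Surjective π :=
    (Module.AEval'.of f).symm.surjective.comp
      (e.symm.surjective.comp (Function.Surjective.piMap fun i => Submodule.mkQ_surjective _))
  let N : Submodule K[X] (ι → K[X]) :=
    Submodule.pi Set.univ fun i => Submodule.span K[X] {(X : K[X]) ^ (k i - m)}
  have hker : ker ((f ^ m) ∘ₗ π) = N.restrictScalars K := by
    ext p
    have hp : (f ^ m) (π p) = (Module.AEval'.of f).symm (e.symm ((X : K[X]) ^ m • mk p)) := by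
      rw [map_smul, Module.AEval.of_symm_smul, aeval_X_pow]
      rfl
    rw [LinearMap.mem_ker, LinearMap.comp_apply, hp, LinearEquiv.map_eq_zero_iff,
      LinearEquiv.map_eq_zero_iff, funext_iff]
    simp only [N, Submodule.restrictScalars_mem, Submodule.mem_pi, Set.mem_univ, true_imp_iff]
    exact forall_congr' fun i => X_pow_smul_mk_jordanBlock_eq_zero_iff
  calc Module.finrank K (range (f ^ m))
      = Module.finrank K (range ((f ^ m) ∘ₗ π)) := by
        rw [range_comp_of_range_eq_top _ (range_eq_top.2 hπ)]
    _ = Module.finrank K ((ι → K[X]) ⧸ N.restrictScalars K) := by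
        rw [← hker, (quotKerEquivRange ((f ^ m) ∘ₗ π)).finrank_eq]
    _ = Module.finrank K (∀ i, JordanBlock K (k i - m)) :=
        ((Submodule.Quotient.restrictScalarsEquiv K N).trans
          ((Submodule.quotientPi _).restrictScalars K)).finrank_eq
    _ = ∑ i, (k i - m) := by simp only [Module.finrank_pi_fintype, finrank_jordanBlock]

variable [FiniteDimensional K V] {f : V →ₗ[K] V}

theorem finrank_ker_inf_range_pow [Fintype ι]
    (e : Module.AEval' f ≃ₗ[K[X]] ∀ i, JordanBlock K (k i)) (m : ℕ) :
    Module.finrank K ↥(ker f ⊓ range (f ^ m)) = #{i | m < k i} := by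
  have hsplit : ∑ i, (k i - m) = #{i | m < k i} + ∑ i, (k i - (m + 1)) := by
    rw [Finset.card_filter, ← Finset.sum_add_distrib]
    exact Finset.sum_congr rfl fun i _ => by split_ifs <;> omega
  have hrank := finrank_ker_inf_add_finrank_map f (range (f ^ m))
  rw [← range_comp, ← Module.End.mul_eq_comp, ← pow_succ', finrank_range_pow e,
    finrank_range_pow e, hsplit] at hrank
  exact Nat.add_right_cancel hrank

theorem ulm_eq_card [Fintype ι] (e : Module.AEval' f ≃ₗ[K[X]] ∀ i, JordanBlock K (k i)) {r : ℕ}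
    (hr : r ≠ 0) : ulm f r = #{i | k i = r} := by
  have hsplit : #{i | r - 1 < k i} = #{i | k i = r} + #{i | r < k i} := by
    simp only [Finset.card_filter, ← Finset.sum_add_distrib]
    exact Finset.sum_congr rfl fun i _ => by split_ifs <;> omega
  rw [ulm, finrank_ker_inf_range_pow e, finrank_ker_inf_range_pow e, hsplit, Nat.add_sub_cancel]

theorem ulm_eq_one_of_forall_isEmpty [Finite ι]
    (e : Module.AEval' f ≃ₗ[K[X]] ∀ i, JordanBlock K (k i)) {i : ι} (hi : k i ≠ 0)
    (hiso : ∀ j ≠ i, IsEmpty (JordanBlock K (k i) ≃ₗ[K[X]] JordanBlock K (k j))) :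
    ulm f (k i) = 1 := by
  have := Fintype.ofFinite ι
  have huniq : ∀ j, k j = k i ↔ j = i := fun j => by
    refine ⟨fun hj => ?_, fun hj => hj ▸ rfl⟩
    by_contra hji
    exact (hiso j hji).false (hj ▸ LinearEquiv.refl K[X] _)
  rw [ulm_eq_card e hi, Finset.card_eq_one]
  exact ⟨i, by ext j; simp [huniq]⟩

theorem unitSubalgebra_end_aeval_eq_top (hf : IsNilpotent f)
    (hd : {r | r ≠ 0 ∧ ulm f r = 1}.Subsingleton) :
    unitSubalgebra K[X] (Module.End K[X] (Module.AEval' f)) = ⊤ := by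
  obtain ⟨d, k, ⟨e⟩⟩ := exists_linearEquiv_pi_jordanBlock hf
  refine unitSubalgebra_eq_top_of_algEquiv (e.symm.conjAlgEquiv K[X])
    (unitSubalgebra_end_pi_eq_top (fun i => exists_eq_smul_one_of_end_quotient _) ?_)
  rintro i ⟨hi, hiso⟩ j ⟨hj, hjso⟩
  have hi₀ := ne_zero_of_nontrivial_jordanBlock hi
  have hj₀ := ne_zero_of_nontrivial_jordanBlock hj
  have hij : k i = k j := hd ⟨hi₀, ulm_eq_one_of_forall_isEmpty e hi₀ hiso⟩
    ⟨hj₀, ulm_eq_one_of_forall_isEmpty e hj₀ hjso⟩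
  by_contra hne
  exact (hjso i hne).false (hij ▸ LinearEquiv.refl K[X] _)

end Nilpotent

section Transfer

variable {f : V →ₗ[K] V} {W : Submodule K V}

theorem hinv_of_isFullyInvariant (hW : W ∈ (Algebra.lsmul K K V f).invtSubmodule)
    (hS : (Module.AEval.mapSubmodule K V f ⟨W, hW⟩).IsFullyInvariant) : Hinv f W := by
  rintro g hg _ ⟨v, hv, rfl⟩
  let T : Module.End K[X] (Module.AEval' f) :=
    LinearMap.ofAEval f ((Module.AEval'.of f).toLinearMap ∘ₗ g) fun m => by
      rw [LinearMap.comp_apply, LinearMap.comp_apply, LinearEquiv.coe_coe, Module.AEval'.X_smul_of]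
      exact congrArg (Module.AEval'.of f) (LinearMap.congr_fun hg m)
  have hT : Module.AEval'.of f v ∈ (Module.AEval.mapSubmodule K V f ⟨W, hW⟩).comap T :=
    hS T (by simpa using hv)
  simpa [T, LinearMap.ofAEval] using hT

theorem mapSubmodule_le_comap_of_chinv (hchar : Chinv f W)
    (hW : W ∈ (Algebra.lsmul K K V f).invtSubmodule)
    (α : Module.AEval' f ≃ₗ[K[X]] Module.AEval' f) :
    Module.AEval.mapSubmodule K V f ⟨W, hW⟩ ≤
      (Module.AEval.mapSubmodule K V f ⟨W, hW⟩).comap (α : Module.End K[X] (Module.AEval' f)) := by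
  let of := Module.AEval'.of f
  let γ : V ≃ₗ[K] V := of.trans ((α.restrictScalars K).trans of.symm)
  have hγ : (γ : V →ₗ[K] V) ∘ₗ f = f ∘ₗ (γ : V →ₗ[K] V) := by
    ext v
    change of.symm (α (of (f v))) = f (of.symm (α (of v)))
    rw [← Module.AEval'.X_smul_of, map_smul, Module.AEval'.of_symm_X_smul]
  intro x hx
  rw [Module.AEval.mem_mapSubmodule_apply] at hx
  have hγx : γ (of.symm x) ∈ W := hchar.2 γ hγ ▸ Submodule.mem_map_of_mem hx
  simpa [γ, of] using hγx

end Transfer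

theorem stmt11 [FiniteDimensional K V] (f : V →ₗ[K] V) (hf : IsNilpotent f)
    (hd : ∀ i j : ℕ, 1 ≤ i → 1 ≤ j → ulm f i = 1 → ulm f j = 1 → i = j) :
    ∀ X : Submodule K V, Chinv f X → Hinv f X := by
  intro W hW
  have hinvt : W ∈ (Algebra.lsmul K K V f).invtSubmodule := Submodule.map_le_iff_le_comap.1 hW.1
  have htop : unitSubalgebra K[X] (Module.End K[X] (Module.AEval' f)) = ⊤ :=
    unitSubalgebra_end_aeval_eq_top hf fun i hi j hj =>
      hd i j (Nat.one_le_iff_ne_zero.2 hi.1) (Nat.one_le_iff_ne_zero.2 hj.1) hi.2 hj.2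
  exact hinv_of_isFullyInvariant hinvt <|
    isFullyInvariant_of_unitSubalgebra_eq_top htop (mapSubmodule_le_comap_of_chinv hW hinvt)
end

section
/- Let K = GF(2) and f : V → V nilpotent. There exists a characteristic subspace of V that is not hyperinvariant if and only if for some integers r, s with s > r + 1, the Jordan form of f contains exactly one Jordan block of size s and exactly one Jordan block of size r. -/
open LinearMap

variable {K : Type*} [Field K] {V : Type*} [AddCommGroup V] [Module K V]

/-!
A generator tuple presents the commutant of `f` as a ring of matrices, with a matrix unit `E i j`
for each pair of generators. For `i ≠ j` the endomorphism `E i i * g * E j j` squares to zero, so a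
characteristic subspace `X`, being stable under `1 + E i i * g * E j j`, is stable under it, and `X`
is hyperinvariant as soon as it is stable under the projections `E i i`. It is stable under `E i i`
when another generator `u j` has the same exponent, since then `E i i = E i j * E j i`. When the
exponents of `u i` and `u j` differ by one, applying `E i j` and `E j i` to a vector of `X` shows
that one of its two components lies in `X`. So if no two blocks of multiplicity one have sizes
differing by at least two, at most one component of a vector of `X` can lie outside `X`, hence none
does.

Conversely, let `u i` and `u j` be the only generators of exponents `r` and `s`, with `r + 1 < s`.
Over `GF(2)`, an automorphism commuting with `f` acts as the identity on the one-dimensional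
quotient of `ker (f ^ r)` by `N r = ker (f ^ (r - 1)) + f (ker (f ^ (r + 1)))`, so it moves `u i`
only by an element of `N r`, and likewise `u j` by an element of `N s`. Thus `N r + f (N s)`
together with `u i + f (u j)` spans a characteristic subspace. It does not contain `u i`, the
projection of `u i + f (u j)`, so it is not hyperinvariant.
-/

section Characteristic

open Polynomial

variable {f : V →ₗ[K] V}

lemma apply_apply_of_commute {g g' : Module.End K V} (h : Commute g g') (v : V) :
    g (g' v) = g' (g v) :=
  LinearMap.congr_fun h.eq v

lemma commute_aeval {g : Module.End K V} (hg : Commute g f) (p : K[X]) :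
    Commute g (aeval f p) :=
  Algebra.commute_of_mem_adjoin_singleton_of_commute (aeval_mem_adjoin_singleton K f) hg

lemma aeval_X_pow_apply (f : V →ₗ[K] V) (n : ℕ) (v : V) :
    aeval f (X ^ n : K[X]) v = (f ^ n) v := by
  rw [map_pow, aeval_X]

lemma aeval_mul_apply (f : V →ₗ[K] V) (p q : K[X]) (v : V) :
    aeval f (p * q) v = aeval f p (aeval f q v) := by
  rw [map_mul, Module.End.mul_apply]

/-! ### Cyclic subspaces -/

lemma mem_cyc_iff_exists_aeval {x w : V} : w ∈ cyc f x ↔ ∃ p : K[X], aeval f p x = w := by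
  constructor
  · intro hw
    induction hw using Submodule.span_induction with
    | mem _ h =>
      obtain ⟨i, rfl⟩ := h
      exact ⟨X ^ i, aeval_X_pow_apply f i x⟩
    | zero => exact ⟨0, by simp⟩
    | add _ _ _ _ hp hq =>
      obtain ⟨p, rfl⟩ := hp
      obtain ⟨q, rfl⟩ := hq
      exact ⟨p + q, by simp⟩
    | smul c _ _ hp =>
      obtain ⟨p, rfl⟩ := hp
      exact ⟨c • p, by simp⟩
  · rintro ⟨p, rfl⟩
    rw [aeval_eq_sum_range, LinearMap.sum_apply]
    exact Submodule.sum_mem _ fun i _ ↦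
      Submodule.smul_mem _ _ (Submodule.subset_span (Set.mem_range_self i))

lemma aeval_mem_cyc (p : K[X]) (x : V) : aeval f p x ∈ cyc f x :=
  mem_cyc_iff_exists_aeval.2 ⟨p, rfl⟩

lemma self_mem_cyc (x : V) : x ∈ cyc f x :=
  Submodule.subset_span ⟨0, rfl⟩

lemma cyc_le {X : Submodule K V} (hX : X.map f ≤ X) {x : V} (hx : x ∈ X) : cyc f x ≤ X := by
  refine Submodule.span_le.2 (Set.range_subset_iff.2 fun n ↦ ?_)
  induction n with
  | zero => exact hx
  | succ n ih =>
    rw [pow_succ']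
    exact hX ⟨_, ih, rfl⟩

lemma cyc_le_iff {X : Submodule K V} (hX : X.map f ≤ X) {x : V} : cyc f x ≤ X ↔ x ∈ X :=
  ⟨fun h ↦ h (self_mem_cyc x), cyc_le hX⟩

lemma map_cyc_le (x : V) : (cyc f x).map f ≤ cyc f x := by
  rw [cyc, Submodule.map_span_le]
  rintro _ ⟨i, rfl⟩
  exact Submodule.subset_span ⟨i + 1, by simp [pow_succ']⟩

-- Modulo `X ^ n`, every polynomial is associated to a power of `X`.
lemma exists_X_pow_dvd_and_X_pow_dvd_sub (p : K[X]) (n : ℕ) :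
    ∃ (a : ℕ) (q : K[X]), X ^ a ∣ p ∧ X ^ n ∣ X ^ a - q * p := by
  rcases eq_or_ne p 0 with rfl | hp
  · exact ⟨n, 0, dvd_zero _, by simp⟩
  obtain ⟨a, r, hr, rfl⟩ := WfDvdMonoid.max_power_factor hp (irreducible_X (R := K))
  have hcop : IsCoprime ((X : K[X]) ^ n) r :=
    IsCoprime.pow_left ((irreducible_X.coprime_iff_not_dvd).2 hr)
  obtain ⟨c, q, hcq⟩ := hcop
  exact ⟨a, q, dvd_mul_right _ _, X ^ a * c, by linear_combination -X ^ a * hcq⟩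

lemma exists_forall_cyc_aeval_eq (hf : IsNilpotent f) (p : K[X]) :
    ∃ a : ℕ, ∀ v, cyc f (aeval f p v) = cyc f ((f ^ a) v) := by
  obtain ⟨n, hn⟩ := hf
  obtain ⟨a, q, ⟨r, hr⟩, ⟨c, hc⟩⟩ := exists_X_pow_dvd_and_X_pow_dvd_sub p n
  have hfa : f ^ a = aeval f (q * p) := by
    rw [← sub_eq_zero]
    simpa [hn] using congrArg (aeval f) hc
  refine ⟨a, fun v ↦ le_antisymm (cyc_le (map_cyc_le _) ?_) (cyc_le (map_cyc_le _) ?_)⟩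
  · rw [hr, mul_comm, aeval_mul_apply, aeval_X_pow_apply]
    exact aeval_mem_cyc r _
  · rw [hfa, aeval_mul_apply]
    exact aeval_mem_cyc q _

lemma exists_forall_aeval_mem_iff (hf : IsNilpotent f) {X : Submodule K V} (hX : X.map f ≤ X)
    (p : K[X]) : ∃ a : ℕ, ∀ v, aeval f p v ∈ X ↔ (f ^ a) v ∈ X := by
  obtain ⟨a, ha⟩ := exists_forall_cyc_aeval_eq hf p
  exact ⟨a, fun v ↦ by rw [← cyc_le_iff hX, ha, cyc_le_iff hX]⟩

lemma expEq_iff_forall_aeval {x : V} {ℓ : ℕ} :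
    ExpEq f x ℓ ↔ ∀ p : K[X], aeval f p x = 0 ↔ X ^ ℓ ∣ p := by
  refine ⟨fun hx p ↦ ⟨fun hp ↦ ?_, ?_⟩, fun h ↦ ⟨?_, fun j hj ↦ ?_⟩⟩
  · obtain ⟨a, q, hdvd, ⟨c, hc⟩⟩ := exists_X_pow_dvd_and_X_pow_dvd_sub p ℓ
    refine (pow_dvd_pow X (not_lt.1 fun ha ↦ hx.2 a ha ?_)).trans hdvd
    calc (f ^ a) x = aeval f (c * X ^ ℓ + q * p) x := by
          rw [mul_comm c, ← hc, sub_add_cancel, aeval_X_pow_apply]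
      _ = 0 := by simp [hx.1, hp]
  · rintro ⟨q, rfl⟩
    rw [mul_comm, aeval_mul_apply, aeval_X_pow_apply, hx.1, map_zero]
  · rw [← aeval_X_pow_apply, h]
  · rw [← aeval_X_pow_apply, Ne, h, pow_dvd_pow_iff X_ne_zero not_isUnit_X]
    exact not_le.2 hj

lemma ExpEq.exists_eq_smul_of_mem_cyc_of_mem_ker {x w : V} {ℓ : ℕ} (hx : ExpEq f x ℓ)
    (hw : w ∈ cyc f x) (hfw : f w = 0) : ∃ c : K, w = c • (f ^ (ℓ - 1)) x := by
  obtain ⟨p, rfl⟩ := mem_cyc_iff_exists_aeval.1 hw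
  have hdvd : X ^ ℓ ∣ X * p := by
    rw [← expEq_iff_forall_aeval.1 hx, aeval_mul_apply, aeval_X, hfw]
  obtain ⟨q, rfl⟩ : X ^ (ℓ - 1) ∣ p := by
    cases ℓ with
    | zero => exact one_dvd p
    | succ ℓ => rwa [pow_succ', mul_dvd_mul_iff_left X_ne_zero] at hdvd
  refine ⟨q.coeff 0, sub_eq_zero.1 ?_⟩
  have htop : X ^ ℓ ∣ X ^ (ℓ - 1) * q - q.coeff 0 • X ^ (ℓ - 1) := by
    have hq : X ^ (ℓ - 1) * q - q.coeff 0 • X ^ (ℓ - 1) = X ^ (ℓ - 1 + 1) * q.divX := by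
      rw [smul_eq_C_mul]
      linear_combination (-X ^ (ℓ - 1)) * q.divX_mul_X_add
    exact hq ▸ (pow_dvd_pow X (by omega)).mul_right _
  simpa [aeval_X_pow_apply] using (expEq_iff_forall_aeval.1 hx _).2 htop

/-! ### Generator tuples as presentations -/

section AevalSum

variable {ι : Type*} [Fintype ι]

/-- The map `p ↦ ∑ i, p i (f) (u i)`, through which a generator tuple presents `V` as a
`K[X]`-module. -/
noncomputable def aevalSum (f : V →ₗ[K] V) (u : ι → V) : (ι → K[X]) →ₗ[K] V :=
  ∑ i, LinearMap.applyₗ (u i) ∘ₗ (aeval f).toLinearMap ∘ₗ LinearMap.proj i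

lemma aevalSum_apply (u : ι → V) (p : ι → K[X]) :
    aevalSum f u p = ∑ i, aeval f (p i) (u i) := by
  simp [aevalSum]

lemma map_aevalSum {g : Module.End K V} (hg : Commute g f) (u : ι → V) (p : ι → K[X]) :
    g (aevalSum f u p) = aevalSum f (fun i ↦ g (u i)) p := by
  simp only [aevalSum_apply, map_sum, apply_apply_of_commute (commute_aeval hg _)]

lemma aevalSum_X_smul (u : ι → V) (p : ι → K[X]) :
    aevalSum f u ((X : K[X]) • p) = f (aevalSum f u p) := by
  simp only [aevalSum_apply, Pi.smul_apply, smul_eq_mul, aeval_mul_apply, aeval_X, map_sum]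

lemma aevalSum_single [DecidableEq ι] (u : ι → V) (i : ι) (p : K[X]) :
    aevalSum f u (Pi.single i p) = aeval f p (u i) := by
  rw [aevalSum_apply, Finset.sum_eq_single i (fun j _ hj ↦ by simp [hj]) (by simp),
    Pi.single_eq_same]

lemma range_aevalSum (u : ι → V) : LinearMap.range (aevalSum f u) = ⨆ i, cyc f (u i) := by
  classical
  apply le_antisymm
  · rintro _ ⟨p, rfl⟩
    rw [aevalSum_apply]
    exact Submodule.sum_mem _ fun i _ ↦ Submodule.mem_iSup_of_mem i (aeval_mem_cyc (p i) _)
  · refine iSup_le fun i w hw ↦ ?_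
    obtain ⟨p, rfl⟩ := mem_cyc_iff_exists_aeval.1 hw
    exact ⟨Pi.single i p, aevalSum_single u i p⟩

lemma iSupIndep_cyc_iff (u : ι → V) : iSupIndep (fun i ↦ cyc f (u i)) ↔
    ∀ p : ι → K[X], aevalSum f u p = 0 → ∀ i, aeval f (p i) (u i) = 0 := by
  classical
  rw [iSupIndep_iff_finsetSum_eq_zero_imp_eq_zero]
  constructor
  · intro h p hp i
    rw [aevalSum_apply] at hp
    exact h Finset.univ _ (fun i _ ↦ aeval_mem_cyc (p i) (u i)) hp i (Finset.mem_univ i)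
  · intro h s v hv hsum i hi
    have hp : ∀ i, ∃ p : K[X], aeval f p (u i) = if i ∈ s then v i else 0 := fun i ↦ by
      split_ifs with his
      · exact mem_cyc_iff_exists_aeval.1 (hv i his)
      · exact ⟨0, by simp⟩
    choose p hp using hp
    have hpi := h p (by simpa [aevalSum_apply, hp] using hsum) i
    rwa [hp, if_pos hi] at hpi

end AevalSum

theorem isGenTuple_iff_aevalSum {k : ℕ} {u : Fin k → V} {t : Fin k → ℕ} :
    IsGenTuple f u t ↔ Function.Surjective (aevalSum f u) ∧
      ∀ p, aevalSum f u p = 0 ↔ ∀ i, X ^ t i ∣ p i := by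
  rw [IsGenTuple, DirectSum.isInternal_submodule_iff_iSupIndep_and_iSup_eq_top, iSupIndep_cyc_iff,
    ← range_aevalSum, LinearMap.range_eq_top]
  constructor
  · rintro ⟨hexp, hindep, hsurj⟩
    refine ⟨hsurj, fun p ↦ ⟨fun hp i ↦ ?_, fun hp ↦ ?_⟩⟩
    · exact (expEq_iff_forall_aeval.1 (hexp i) _).1 (hindep p hp i)
    · rw [aevalSum_apply]
      exact Finset.sum_eq_zero fun i _ ↦ (expEq_iff_forall_aeval.1 (hexp i) _).2 (hp i)
  · rintro ⟨hsurj, hker⟩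
    have hann (i) (p : K[X]) : aeval f p (u i) = 0 ↔ X ^ t i ∣ p := by
      rw [← aevalSum_single, hker]
      refine ⟨fun h ↦ by simpa using h i, fun h j ↦ ?_⟩
      rcases eq_or_ne j i with rfl | hj
      · simpa using h
      · simp [hj]
    exact ⟨fun i ↦ expEq_iff_forall_aeval.2 (hann i),
      fun p hp i ↦ (hann i _).2 ((hker p).1 hp i), hsurj⟩

theorem exists_isGenTuple [FiniteDimensional K V] (hf : IsNilpotent f) :
    ∃ (k : ℕ) (u : Fin k → V) (t : Fin k → ℕ), IsGenTuple f u t := by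
  obtain ⟨n, hn⟩ := hf
  have htors : Module.IsTorsion' (Module.AEval' f) (Submonoid.powers (X : K[X])) := by
    intro x
    obtain ⟨v, rfl⟩ := (Module.AEval'.of f).surjective x
    refine ⟨⟨X ^ n, n, rfl⟩, ?_⟩
    change (X ^ n : K[X]) • Module.AEval'.of f v = 0
    rw [Module.AEval'.X_pow_smul_of, hn, zero_smul, map_zero]
  obtain ⟨k, t, ⟨Φ⟩⟩ := Module.torsion_by_prime_power_decomposition irreducible_X htors
  let Q : Fin k → Type _ := fun i ↦ K[X] ⧸ Submodule.span K[X] {(X : K[X]) ^ t i}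
  let mk (i : Fin k) (p : K[X]) : Q i := Submodule.Quotient.mk p
  have mk_eq_zero (i p) : mk i p = 0 ↔ X ^ t i ∣ p := by
    rw [Submodule.Quotient.mk_eq_zero, Ideal.submodule_span_eq, Ideal.mem_span_singleton]
  let Ψ : V ≃+ DirectSum (Fin k) Q := (Module.AEval'.of f).toAddEquiv.trans Φ.toAddEquiv
  let u : Fin k → V := fun i ↦ Ψ.symm (DirectSum.of Q i (mk i 1))
  have hΨ (i) (p : K[X]) : Ψ (aeval f p (u i)) = DirectSum.of Q i (mk i p) := by
    have hsmul : aeval f p (u i) = Ψ.symm (p • DirectSum.lof K[X] (Fin k) Q i (mk i 1)) := by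
      change _ = (Module.AEval'.of f).symm (Φ.symm _)
      rw [map_smul, Module.AEval.of_symm_smul]
      rfl
    rw [hsmul, Ψ.apply_symm_apply, ← map_smul, ← Submodule.Quotient.mk_smul, smul_eq_mul, mul_one]
    rfl
  have hΨsum (p : Fin k → K[X]) (i) : Ψ (aevalSum f u p) i = mk i (p i) := by
    rw [aevalSum_apply, map_sum, DFinsupp.finsetSum_apply]
    simp only [hΨ]
    rw [Finset.sum_eq_single i (fun j _ hj ↦ DirectSum.of_eq_of_ne _ _ _ hj.symm) (by simp),
      DirectSum.of_eq_same]
  refine ⟨k, u, t, isGenTuple_iff_aevalSum.2 ⟨fun v ↦ ?_, fun p ↦ ?_⟩⟩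
  · choose p hp using fun i ↦ Submodule.Quotient.mk_surjective _ (Ψ v i)
    exact ⟨p, Ψ.injective (DFinsupp.ext fun i ↦ (hΨsum p i).trans (hp i))⟩
  · rw [← Ψ.map_eq_zero_iff, DFinsupp.ext_iff]
    exact forall_congr' fun i ↦ by rw [hΨsum]; exact mk_eq_zero i (p i)

/-! ### Matrix units of the commutant -/

variable {k : ℕ} {u : Fin k → V} {t : Fin k → ℕ}

namespace IsGenTuple

lemma pow_gen (h : IsGenTuple f u t) (i : Fin k) : (f ^ t i) (u i) = 0 := (h.1 i).1

lemma end_ext (h : IsGenTuple f u t) {g g' : Module.End K V} (hg : Commute g f)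
    (hg' : Commute g' f) (hgu : ∀ i, g (u i) = g' (u i)) : g = g' := by
  ext v
  obtain ⟨p, rfl⟩ := (isGenTuple_iff_aevalSum.1 h).1 v
  rw [map_aevalSum hg, map_aevalSum hg', funext hgu]

theorem exists_commute_apply_eq (h : IsGenTuple f u t) (w : Fin k → V)
    (hw : ∀ i, (f ^ t i) (w i) = 0) :
    ∃ g : Module.End K V, Commute g f ∧ ∀ i, g (u i) = w i := by
  obtain ⟨hsurj, hker⟩ := isGenTuple_iff_aevalSum.1 h
  obtain ⟨σ, hσ⟩ :=
    (aevalSum f u).exists_rightInverse_of_surjective (LinearMap.range_eq_top.2 hsurj)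
  have hrel : ∀ p, aevalSum f u p = 0 → aevalSum f w p = 0 := fun p hp ↦ by
    rw [aevalSum_apply]
    refine Finset.sum_eq_zero fun i _ ↦ ?_
    obtain ⟨q, hq⟩ := (hker p).1 hp i
    rw [hq, mul_comm, aeval_mul_apply, aeval_X_pow_apply, hw, map_zero]
  have hlift : ∀ p, (aevalSum f w ∘ₗ σ) (aevalSum f u p) = aevalSum f w p := fun p ↦ by
    rw [← sub_eq_zero, LinearMap.comp_apply, ← map_sub]
    apply hrel
    rw [map_sub, sub_eq_zero]
    exact LinearMap.congr_fun hσ _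
  refine ⟨aevalSum f w ∘ₗ σ, LinearMap.ext fun v ↦ ?_, fun i ↦ ?_⟩
  · obtain ⟨p, rfl⟩ := hsurj v
    rw [Module.End.mul_apply, Module.End.mul_apply, ← aevalSum_X_smul, hlift, hlift,
      aevalSum_X_smul]
  · simpa [aevalSum_single] using hlift (Pi.single i 1)

private lemma pow_single_gen (h : IsGenTuple f u t) (i j l : Fin k) :
    (f ^ t l) (Pi.single (M := fun _ ↦ V) j ((f ^ (t i - t j)) (u i)) l) = 0 := by
  rcases eq_or_ne l j with rfl | hl
  · rw [Pi.single_eq_same, ← Module.End.mul_apply, ← pow_add]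
    exact Module.End.pow_map_zero_of_le (by omega) (h.pow_gen i)
  · rw [Pi.single_eq_of_ne hl, map_zero]

/-- The analogue of the matrix unit `E i j` in the commutant of `f`: it sends `u j` to
`f ^ (t i - t j) (u i)` and the other generators to `0`. The exponent is a truncated subtraction,
the least one compatible with the exponents of `u i` and `u j`; in particular `E i i` is the
projection onto `cyc f (u i)`. -/
noncomputable def matrixUnit (h : IsGenTuple f u t) (i j : Fin k) : Module.End K V :=
  (h.exists_commute_apply_eq _ (h.pow_single_gen i j)).choose

lemma commute_matrixUnit (h : IsGenTuple f u t) (i j : Fin k) : Commute (h.matrixUnit i j) f :=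
  (h.exists_commute_apply_eq _ (h.pow_single_gen i j)).choose_spec.1

lemma matrixUnit_apply_gen (h : IsGenTuple f u t) (i j : Fin k) :
    h.matrixUnit i j (u j) = (f ^ (t i - t j)) (u i) := by
  rw [matrixUnit, (h.exists_commute_apply_eq _ (h.pow_single_gen i j)).choose_spec.2,
    Pi.single_eq_same]

lemma matrixUnit_apply_gen_of_ne (h : IsGenTuple f u t) (i : Fin k) {j l : Fin k} (hl : l ≠ j) :
    h.matrixUnit i j (u l) = 0 := by
  rw [matrixUnit, (h.exists_commute_apply_eq _ (h.pow_single_gen i j)).choose_spec.2,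
    Pi.single_eq_of_ne hl]

lemma matrixUnit_self_apply_gen (h : IsGenTuple f u t) (i : Fin k) :
    h.matrixUnit i i (u i) = u i := by
  rw [matrixUnit_apply_gen, Nat.sub_self, pow_zero, Module.End.one_apply]

lemma matrixUnit_apply_aevalSum (h : IsGenTuple f u t) (i j : Fin k) (p : Fin k → K[X]) :
    h.matrixUnit i j (aevalSum f u p) = aeval f (p j) ((f ^ (t i - t j)) (u i)) := by
  rw [map_aevalSum (h.commute_matrixUnit i j), aevalSum_apply, Finset.sum_eq_single j
    (fun l _ hl ↦ by rw [h.matrixUnit_apply_gen_of_ne i hl, map_zero]) (by simp),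
    matrixUnit_apply_gen]

lemma matrixUnit_self_apply_mem_cyc (h : IsGenTuple f u t) (i : Fin k) (v : V) :
    h.matrixUnit i i v ∈ cyc f (u i) := by
  obtain ⟨p, rfl⟩ := (isGenTuple_iff_aevalSum.1 h).1 v
  rw [matrixUnit_apply_aevalSum, Nat.sub_self, pow_zero, Module.End.one_apply]
  exact aeval_mem_cyc _ _

lemma sum_matrixUnit_self (h : IsGenTuple f u t) : ∑ i, h.matrixUnit i i = 1 := by
  refine h.end_ext (Commute.sum_left _ _ _ fun i _ ↦ h.commute_matrixUnit i i)
    (Commute.one_left f) fun j ↦ ?_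
  rw [LinearMap.sum_apply, Finset.sum_eq_single j
    (fun i _ hi ↦ h.matrixUnit_apply_gen_of_ne i hi.symm) (by simp),
    matrixUnit_self_apply_gen, Module.End.one_apply]

lemma sum_matrixUnit_self_apply (h : IsGenTuple f u t) (v : V) :
    ∑ i, h.matrixUnit i i v = v := by
  rw [← LinearMap.sum_apply, sum_matrixUnit_self, Module.End.one_apply]

lemma matrixUnit_mul_of_ne (h : IsGenTuple f u t) (i l : Fin k) {j m : Fin k} (hjm : j ≠ m) :
    h.matrixUnit i j * h.matrixUnit m l = 0 := by
  ext v
  obtain ⟨p, rfl⟩ := (isGenTuple_iff_aevalSum.1 h).1 v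
  have hf := (h.commute_matrixUnit i j).pow_right (t m - t l)
  rw [Module.End.mul_apply, matrixUnit_apply_aevalSum,
    apply_apply_of_commute (commute_aeval (h.commute_matrixUnit i j) _),
    apply_apply_of_commute hf, h.matrixUnit_apply_gen_of_ne i hjm.symm, map_zero, map_zero,
    LinearMap.zero_apply]

lemma matrixUnit_mul_swap_of_eq (h : IsGenTuple f u t) {i j : Fin k} (ht : t i = t j) :
    h.matrixUnit i j * h.matrixUnit j i = h.matrixUnit i i := by
  ext v
  obtain ⟨p, rfl⟩ := (isGenTuple_iff_aevalSum.1 h).1 v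
  simp [matrixUnit_apply_aevalSum, matrixUnit_apply_gen, ht,
    apply_apply_of_commute (commute_aeval (h.commute_matrixUnit i j) _)]

lemma exists_matrixUnit_self_conj_eq (h : IsGenTuple f u t) {g : Module.End K V}
    (hg : Commute g f) (i : Fin k) :
    ∃ p : K[X], h.matrixUnit i i * g * h.matrixUnit i i = aeval f p * h.matrixUnit i i := by
  obtain ⟨p, hp⟩ := mem_cyc_iff_exists_aeval.1 (h.matrixUnit_self_apply_mem_cyc i (g (u i)))
  have hE := h.commute_matrixUnit i i
  refine ⟨p, h.end_ext ((hE.mul_left hg).mul_left hE)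
    ((commute_aeval rfl p).symm.mul_left hE) fun j ↦ ?_⟩
  rcases eq_or_ne j i with rfl | hj
  · simp only [Module.End.mul_apply, matrixUnit_self_apply_gen, hp]
  · simp only [Module.End.mul_apply, h.matrixUnit_apply_gen_of_ne i hj, map_zero]

/-! ### Ulm invariants -/

lemma linearIndependent_pow_gen (h : IsGenTuple f u t) (n : ℕ) :
    LinearIndependent K fun i : {i : Fin k // n < t i} ↦ (f ^ (t i - 1)) (u i) := by
  refine Fintype.linearIndependent_iff.2 fun c hc i ↦ ?_
  have hi : (f ^ (t i - 1)) (u i) ≠ 0 := (h.1 i).2 _ (Nat.sub_one_lt_of_lt i.2)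
  have hE (j : Fin k) : h.matrixUnit i i ((f ^ (t j - 1)) (u j)) =
      (f ^ (t j - 1)) (h.matrixUnit i i (u j)) :=
    apply_apply_of_commute ((h.commute_matrixUnit i i).pow_right _) _
  have hci := congrArg (h.matrixUnit i i) hc
  simp only [map_sum, map_smul, hE] at hci
  rw [Finset.sum_eq_single i (fun j _ hj ↦ by
    rw [h.matrixUnit_apply_gen_of_ne i (Subtype.coe_injective.ne hj), map_zero, smul_zero])
    (by simp), matrixUnit_self_apply_gen, map_zero] at hci
  exact (smul_eq_zero.1 hci).resolve_right hi

lemma ker_inf_range_pow (h : IsGenTuple f u t) (n : ℕ) :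
    LinearMap.ker f ⊓ LinearMap.range (f ^ n) =
      Submodule.span K (Set.range fun i : {i : Fin k // n < t i} ↦ (f ^ (t i - 1)) (u i)) := by
  apply le_antisymm
  · rintro v ⟨hv, w, rfl⟩
    rw [← h.sum_matrixUnit_self_apply ((f ^ n) w)]
    refine Submodule.sum_mem _ fun i _ ↦ ?_
    have hker : f (h.matrixUnit i i ((f ^ n) w)) = 0 := by
      rw [← apply_apply_of_commute (h.commute_matrixUnit i i), LinearMap.mem_ker.1 hv, map_zero]
    obtain ⟨c, hc⟩ := (h.1 i).exists_eq_smul_of_mem_cyc_of_mem_ker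
      (h.matrixUnit_self_apply_mem_cyc i _) hker
    rcases lt_or_ge n (t i) with hn | hn
    · rw [hc]
      exact Submodule.smul_mem _ _ (Submodule.subset_span ⟨⟨i, hn⟩, rfl⟩)
    · obtain ⟨p, hp⟩ := mem_cyc_iff_exists_aeval.1 (h.matrixUnit_self_apply_mem_cyc i w)
      have hzero : h.matrixUnit i i ((f ^ n) w) = 0 := by
        rw [apply_apply_of_commute ((h.commute_matrixUnit i i).pow_right n), ← hp,
          apply_apply_of_commute (commute_aeval ((Commute.refl f).pow_left n) p),
          Module.End.pow_map_zero_of_le hn (h.pow_gen i), map_zero]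
      rw [hzero]
      exact Submodule.zero_mem _
  · refine Submodule.span_le.2 (Set.range_subset_iff.2 fun ⟨i, hi⟩ ↦ ⟨?_, ?_⟩)
    · rw [SetLike.mem_coe, LinearMap.mem_ker, ← Module.End.mul_apply, ← pow_succ',
        Nat.sub_add_cancel (Nat.one_le_of_lt hi), h.pow_gen]
    · exact f.iterateRange.monotone (Nat.le_sub_one_of_lt hi) ⟨u i, rfl⟩

lemma finrank_ker_inf_range_pow (h : IsGenTuple f u t) (n : ℕ) :
    Module.finrank K ↥(LinearMap.ker f ⊓ LinearMap.range (f ^ n)) =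
      (Finset.univ.filter fun i ↦ n < t i).card := by
  rw [ker_inf_range_pow h, finrank_span_eq_card (h.linearIndependent_pow_gen n),
    Fintype.card_subtype]

theorem ulm_eq_card (h : IsGenTuple f u t) {r : ℕ} (hr : 1 ≤ r) :
    ulm f r = (Finset.univ.filter fun i ↦ t i = r).card := by
  rw [ulm, h.finrank_ker_inf_range_pow, h.finrank_ker_inf_range_pow,
    ← Finset.card_sdiff_of_subset (Finset.monotone_filter_right _ fun i _ hi ↦ by omega)]
  congr 1
  ext i
  simp only [Finset.mem_sdiff, Finset.mem_filter, Finset.mem_univ, true_and]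
  omega

lemma ulm_eq_one_iff (h : IsGenTuple f u t) {r : ℕ} (hr : 1 ≤ r) :
    ulm f r = 1 ↔ ∃ i, t i = r ∧ ∀ l, t l = r → l = i := by
  rw [h.ulm_eq_card hr, Finset.card_eq_one]
  simp only [Finset.eq_singleton_iff_unique_mem, Finset.mem_filter, Finset.mem_univ, true_and]

end IsGenTuple

/-! ### Characteristic subspaces under the matrix units -/

namespace Chinv

variable {X : Submodule K V}

-- `1 + g` is an automorphism.
lemma map_mem_of_isNilpotent (hX : Chinv f X) {g : Module.End K V} (hg : Commute g f)
    (hnil : IsNilpotent g) {v : V} (hv : v ∈ X) : g v ∈ X := by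
  let α : V ≃ₗ[K] V :=
    LinearEquiv.ofBijective (1 + g) ((Module.End.isUnit_iff _).1 hnil.isUnit_one_add)
  have hα : X.map (α : V →ₗ[K] V) = X := hX.2 α ((Commute.one_left f).add_left hg)
  have hαv : v + g v ∈ X := hα ▸ Submodule.mem_map_of_mem (f := (α : V →ₗ[K] V)) hv
  simpa using X.sub_mem hαv hv

lemma matrixUnit_mem_of_ne (hX : Chinv f X) (h : IsGenTuple f u t) {i j : Fin k} (hij : i ≠ j)
    {v : V} (hv : v ∈ X) : h.matrixUnit i j v ∈ X := by
  refine hX.map_mem_of_isNilpotent (h.commute_matrixUnit i j) ⟨2, ?_⟩ hv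
  rw [sq, h.matrixUnit_mul_of_ne i j hij.symm]

lemma matrixUnit_conj_mem_of_ne (hX : Chinv f X) (h : IsGenTuple f u t) {g : Module.End K V}
    (hg : Commute g f) {i j : Fin k} (hij : i ≠ j) {v : V} (hv : v ∈ X) :
    h.matrixUnit i i (g (h.matrixUnit j j v)) ∈ X := by
  have hcomm : Commute (h.matrixUnit i i * g * h.matrixUnit j j) f :=
    ((h.commute_matrixUnit i i).mul_left hg).mul_left (h.commute_matrixUnit j j)
  refine hX.map_mem_of_isNilpotent hcomm ⟨2, ?_⟩ hv
  calc (h.matrixUnit i i * g * h.matrixUnit j j) ^ 2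
      = h.matrixUnit i i * g * (h.matrixUnit j j * h.matrixUnit i i) * g * h.matrixUnit j j := by
        simp only [sq, mul_assoc]
    _ = 0 := by simp [h.matrixUnit_mul_of_ne j i hij.symm]

theorem hinv_of_forall_matrixUnit_self_mem (hX : Chinv f X) (h : IsGenTuple f u t)
    (hdiag : ∀ i, ∀ v ∈ X, h.matrixUnit i i v ∈ X) : Hinv f X := by
  rintro g hg _ ⟨v, hv, rfl⟩
  rw [← h.sum_matrixUnit_self_apply (g v)]
  refine Submodule.sum_mem _ fun i _ ↦ ?_
  have hexpand : h.matrixUnit i i (g v) = ∑ j, h.matrixUnit i i (g (h.matrixUnit j j v)) := by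
    rw [← map_sum, ← map_sum, h.sum_matrixUnit_self_apply]
  rw [hexpand]
  refine Submodule.sum_mem _ fun j _ ↦ ?_
  rcases eq_or_ne i j with rfl | hij
  · obtain ⟨p, hp⟩ := h.exists_matrixUnit_self_conj_eq hg i
    have hpv : h.matrixUnit i i (g (h.matrixUnit i i v)) = aeval f p (h.matrixUnit i i v) :=
      LinearMap.congr_fun hp v
    rw [hpv]
    exact cyc_le hX.1 (hdiag i v hv) (aeval_mem_cyc p _)
  · exact hX.matrixUnit_conj_mem_of_ne h hg hij hv

lemma matrixUnit_self_mem_of_eq (hX : Chinv f X) (h : IsGenTuple f u t) {i j : Fin k}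
    (hij : i ≠ j) (ht : t i = t j) {v : V} (hv : v ∈ X) : h.matrixUnit i i v ∈ X := by
  rw [← h.matrixUnit_mul_swap_of_eq ht]
  exact hX.matrixUnit_mem_of_ne h hij (hX.matrixUnit_mem_of_ne h hij.symm hv)

lemma matrixUnit_self_mem_of_ulm_ne_one (hX : Chinv f X) (h : IsGenTuple f u t) {i : Fin k}
    (hi : ulm f (t i) ≠ 1) {v : V} (hv : v ∈ X) : h.matrixUnit i i v ∈ X := by
  rcases Nat.eq_zero_or_pos (t i) with hti | hti
  · obtain ⟨p, hp⟩ := mem_cyc_iff_exists_aeval.1 (h.matrixUnit_self_apply_mem_cyc i v)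
    have hui : u i = 0 := by simpa [hti] using h.pow_gen i
    rw [← hp, hui, map_zero]
    exact X.zero_mem
  · have hne : ∃ j, t j = t i ∧ j ≠ i := by
      by_contra! honly
      exact hi ((h.ulm_eq_one_iff hti).2 ⟨i, rfl, honly⟩)
    obtain ⟨j, htj, hji⟩ := hne
    exact hX.matrixUnit_self_mem_of_eq h hji.symm htj.symm hv

-- On the components of `v`, `E i j` and `E j i` act as an exchange `u j ↦ u i`, `u i ↦ f (u j)`.
lemma matrixUnit_self_mem_or_of_eq_add_one (hX : Chinv f X) (hf : IsNilpotent f)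
    (h : IsGenTuple f u t) {i j : Fin k} (ht : t j = t i + 1) {v : V} (hv : v ∈ X) :
    h.matrixUnit i i v ∈ X ∨ h.matrixUnit j j v ∈ X := by
  have hij : i ≠ j := fun hij ↦ by simp [hij] at ht
  obtain ⟨p, rfl⟩ := (isGenTuple_iff_aevalSum.1 h).1 v
  obtain ⟨a, ha⟩ := exists_forall_aeval_mem_iff hf hX.1 (p i)
  obtain ⟨b, hb⟩ := exists_forall_aeval_mem_iff hf hX.1 (p j)
  have hui : (f ^ b) (u i) ∈ X := by
    simpa [h.matrixUnit_apply_aevalSum, ht, hb] using hX.matrixUnit_mem_of_ne h hij hv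
  have huj : (f ^ (a + 1)) (u j) ∈ X := by
    simpa [h.matrixUnit_apply_aevalSum, ht, ha, pow_succ] using
      hX.matrixUnit_mem_of_ne h hij.symm hv
  have hpow {m n : ℕ} (hmn : m ≤ n) {w : V} (hw : (f ^ m) w ∈ X) : (f ^ n) w ∈ X := by
    rw [← Nat.sub_add_cancel hmn, pow_add, Module.End.mul_apply, ← aeval_X_pow_apply]
    exact cyc_le hX.1 hw (aeval_mem_cyc _ _)
  simp only [h.matrixUnit_apply_aevalSum, Nat.sub_self, pow_zero, Module.End.one_apply, ha, hb]
  exact (le_or_gt b a).imp (hpow · hui) (hpow · huj)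

lemma matrixUnit_self_mem_or (hX : Chinv f X) (hf : IsNilpotent f) (h : IsGenTuple f u t)
    (hulm : ∀ r s : ℕ, 1 ≤ r → r + 1 < s → ulm f s = 1 → ulm f r ≠ 1) {i j : Fin k}
    (hij : i ≠ j) {v : V} (hv : v ∈ X) : h.matrixUnit i i v ∈ X ∨ h.matrixUnit j j v ∈ X := by
  wlog hle : t i ≤ t j generalizing i j
  · exact (this hij.symm (le_of_not_ge hle)).symm
  rcases ne_or_eq (ulm f (t i)) 1 with hi | hi
  · exact .inl (hX.matrixUnit_self_mem_of_ulm_ne_one h hi hv)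
  have hti : 1 ≤ t i := Nat.one_le_iff_ne_zero.2 fun hti ↦ by
    rw [hti, ulm, Nat.zero_sub, Nat.sub_self] at hi
    exact zero_ne_one hi
  obtain ht | ht | ht : t i = t j ∨ t j = t i + 1 ∨ t i + 1 < t j := by omega
  · exact .inl (hX.matrixUnit_self_mem_of_eq h hij ht hv)
  · exact hX.matrixUnit_self_mem_or_of_eq_add_one hf h ht hv
  · exact .inr (hX.matrixUnit_self_mem_of_ulm_ne_one h (fun hj ↦ hulm _ _ hti ht hj hi) hv)

theorem hinv_of_forall_ulm_ne_one [FiniteDimensional K V] (hX : Chinv f X) (hf : IsNilpotent f)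
    (hulm : ∀ r s : ℕ, 1 ≤ r → r + 1 < s → ulm f s = 1 → ulm f r ≠ 1) : Hinv f X := by
  obtain ⟨k, u, t, h⟩ := exists_isGenTuple hf
  refine hX.hinv_of_forall_matrixUnit_self_mem h fun i v hv ↦ ?_
  by_contra hi
  have hrest : ∑ j ∈ Finset.univ.erase i, h.matrixUnit j j v ∈ X :=
    Submodule.sum_mem _ fun j hj ↦
      (hX.matrixUnit_self_mem_or hf h hulm (Finset.ne_of_mem_erase hj) hv).resolve_right hi
  refine hi ((Submodule.add_mem_iff_left X hrest).1 ?_)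
  rwa [Finset.add_sum_erase _ (fun j ↦ h.matrixUnit j j v) (Finset.mem_univ i),
    h.sum_matrixUnit_self_apply]

end Chinv

/-! ### A characteristic subspace that is not hyperinvariant -/

lemma hinv_ker_pow (f : V →ₗ[K] V) (n : ℕ) : Hinv f (LinearMap.ker (f ^ n)) := by
  rintro g hg _ ⟨v, hv, rfl⟩
  rw [LinearMap.mem_ker, ← apply_apply_of_commute (Commute.pow_right hg n),
    LinearMap.mem_ker.1 hv, map_zero]

lemma Hinv.sup {X Y : Submodule K V} (hX : Hinv f X) (hY : Hinv f Y) : Hinv f (X ⊔ Y) :=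
  fun g hg ↦ (Submodule.map_sup X Y g).trans_le (sup_le_sup (hX g hg) (hY g hg))

lemma Hinv.map_self {X : Submodule K V} (hX : Hinv f X) : Hinv f (X.map f) := fun g hg ↦ by
  rw [← Submodule.map_comp, hg, Submodule.map_comp]
  exact Submodule.map_mono (hX g hg)

lemma commute_linearEquiv_symm {α : V ≃ₗ[K] V} (hα : Commute (α : Module.End K V) f) :
    Commute (α.symm : Module.End K V) f :=
  LinearMap.ext fun w ↦ α.injective <| by
    simpa using (apply_apply_of_commute hα (α.symm w)).symm

lemma chinv_of_forall_map_le {X : Submodule K V} (hfX : X.map f ≤ X)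
    (hX : ∀ α : V ≃ₗ[K] V, Commute (α : Module.End K V) f → X.map (α : V →ₗ[K] V) ≤ X) :
    Chinv f X := by
  refine ⟨hfX, fun α hα ↦ le_antisymm (hX α hα) fun v hv ↦ ?_⟩
  exact ⟨α.symm v, hX α.symm (commute_linearEquiv_symm hα) ⟨v, hv, rfl⟩, α.apply_symm_apply v⟩

lemma Hinv.chinv_sup_span_singleton {Z : Submodule K V} (hZ : Hinv f Z) {x : V} (hfx : f x ∈ Z)
    (hx : ∀ α : V ≃ₗ[K] V, Commute (α : Module.End K V) f → α x - x ∈ Z) :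
    Chinv f (Z ⊔ K ∙ x) := by
  have hmap {g : Module.End K V} (hg : Commute g f) (hgx : g x ∈ Z ⊔ K ∙ x) :
      (Z ⊔ K ∙ x).map g ≤ Z ⊔ K ∙ x := by
    rw [Submodule.map_sup, Submodule.map_span, Set.image_singleton]
    exact sup_le ((hZ g hg).trans le_sup_left) ((Submodule.span_singleton_le_iff_mem _ _).2 hgx)
  refine chinv_of_forall_map_le (hmap rfl (Submodule.mem_sup_left hfx)) fun α hα ↦ hmap hα ?_
  rw [← sub_add_cancel ((α : V →ₗ[K] V) x) x]
  exact Submodule.add_mem _ (Submodule.mem_sup_left (hx α hα))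
    (Submodule.mem_sup_right (Submodule.mem_span_singleton_self x))

/-- The hyperinvariant subspace of `ker (f ^ r)`, for `r ≥ 1`, spanned by the vectors killed by
`f ^ (r - 1)` and the images under `f` of those killed by `f ^ (r + 1)`. The dimension of the
quotient of `ker (f ^ r)` by it is the `r`-th Ulm invariant of `f`. -/
def ulmSubspace (f : V →ₗ[K] V) (r : ℕ) : Submodule K V :=
  LinearMap.ker (f ^ (r - 1)) ⊔ (LinearMap.ker (f ^ (r + 1))).map f

lemma hinv_ulmSubspace (f : V →ₗ[K] V) (r : ℕ) : Hinv f (ulmSubspace f r) :=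
  (hinv_ker_pow f _).sup (hinv_ker_pow f _).map_self

lemma apply_mem_ker_pow {n : ℕ} {v : V} : f v ∈ LinearMap.ker (f ^ n) ↔ (f ^ (n + 1)) v = 0 := by
  rw [LinearMap.mem_ker, pow_succ, Module.End.mul_apply]

lemma apply_mem_ulmSubspace {r : ℕ} (hr : 1 ≤ r) {v : V} (hv : (f ^ r) v = 0) :
    f v ∈ ulmSubspace f r :=
  Submodule.mem_sup_left (apply_mem_ker_pow.2 (by rwa [Nat.sub_add_cancel hr]))

lemma ulmSubspace_le_ker_pow (f : V →ₗ[K] V) (r : ℕ) : ulmSubspace f r ≤ LinearMap.ker (f ^ r) := by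
  refine sup_le (fun v hv ↦ Module.End.pow_map_zero_of_le (Nat.sub_le r 1) hv) ?_
  rintro _ ⟨v, hv, rfl⟩
  exact apply_mem_ker_pow.2 hv

lemma ulmSubspace_le_ker_pow_sup_range (f : V →ₗ[K] V) (r : ℕ) :
    ulmSubspace f r ≤ LinearMap.ker (f ^ (r - 1)) ⊔ LinearMap.range f :=
  sup_le_sup le_rfl LinearMap.map_le_range

lemma ExpEq.mem_ulmSubspace_of_ne {x w : V} {ℓ r : ℕ} (hx : ExpEq f x ℓ) (hr : ℓ ≠ r)
    (hw : w ∈ cyc f x) (hfw : (f ^ r) w = 0) : w ∈ ulmSubspace f r := by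
  rcases hr.lt_or_gt with hlt | hgt
  · exact Submodule.mem_sup_left (cyc_le (hinv_ker_pow f _ f rfl)
      (Module.End.pow_map_zero_of_le (Nat.le_sub_one_of_lt hlt) hx.1) hw)
  · obtain ⟨p, rfl⟩ := mem_cyc_iff_exists_aeval.1 hw
    have hdvd : X ^ ℓ ∣ X ^ r * p := by
      rwa [← expEq_iff_forall_aeval.1 hx, aeval_mul_apply, aeval_X_pow_apply]
    obtain ⟨q, rfl⟩ : X ∣ p := by
      rw [← mul_dvd_mul_iff_left (pow_ne_zero r X_ne_zero), ← pow_succ]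
      exact (pow_dvd_pow X hgt).trans hdvd
    rw [aeval_mul_apply, aeval_X] at hfw ⊢
    exact Submodule.mem_sup_right (Submodule.mem_map_of_mem (apply_mem_ker_pow.1 hfw))

lemma ExpEq.exists_sub_smul_mem_ulmSubspace {x w : V} {r : ℕ} (hx : ExpEq f x r)
    (hw : w ∈ cyc f x) : ∃ c : K, w - c • x ∈ ulmSubspace f r := by
  obtain ⟨p, rfl⟩ := mem_cyc_iff_exists_aeval.1 hw
  refine ⟨p.coeff 0, Submodule.mem_sup_right ⟨aeval f p.divX x, ?_, ?_⟩⟩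
  · exact cyc_le (hinv_ker_pow f _ f rfl) (Module.End.pow_map_zero_of_le (Nat.le_succ r) hx.1)
      (aeval_mem_cyc _ _)
  · calc f (aeval f p.divX x) = aeval f (X * p.divX + C (p.coeff 0)) x - p.coeff 0 • x := by
          rw [map_add, LinearMap.add_apply, aeval_mul_apply, aeval_X, aeval_C,
            Module.algebraMap_end_apply, add_sub_cancel_right]
      _ = aeval f p x - p.coeff 0 • x := by rw [X_mul_divX_add]

namespace IsGenTuple

lemma exists_sub_smul_mem_ulmSubspace (h : IsGenTuple f u t) {i : Fin k}
    (hi : ∀ l, t l = t i → l = i) {w : V} (hw : (f ^ t i) w = 0) :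
    ∃ c : K, w - c • u i ∈ ulmSubspace f (t i) := by
  obtain ⟨c, hc⟩ :=
    (h.1 i).exists_sub_smul_mem_ulmSubspace (h.matrixUnit_self_apply_mem_cyc i w)
  refine ⟨c, ?_⟩
  rw [← h.sum_matrixUnit_self_apply w, ← Finset.add_sum_erase _ _ (Finset.mem_univ i),
    add_sub_right_comm]
  refine Submodule.add_mem _ hc (Submodule.sum_mem _ fun l hl ↦ ?_)
  refine (h.1 l).mem_ulmSubspace_of_ne (fun ht ↦ Finset.ne_of_mem_erase hl (hi l ht))
    (h.matrixUnit_self_apply_mem_cyc l w) ?_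
  exact hinv_ker_pow f (t i) _ (h.commute_matrixUnit l l) ⟨w, hw, rfl⟩

lemma gen_notMem_ker_pow_sup_range (h : IsGenTuple f u t) {i : Fin k} (hi : 1 ≤ t i) :
    u i ∉ LinearMap.ker (f ^ (t i - 1)) ⊔ LinearMap.range f := by
  intro hu
  obtain ⟨v, hv, _, ⟨w, rfl⟩, hvw⟩ := Submodule.mem_sup.1 hu
  apply (h.1 i).2 (t i - 1) (Nat.sub_one_lt_of_lt hi)
  have hE := h.commute_matrixUnit i i
  obtain ⟨p, hp⟩ := mem_cyc_iff_exists_aeval.1 (h.matrixUnit_self_apply_mem_cyc i w)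
  calc (f ^ (t i - 1)) (u i)
      = h.matrixUnit i i ((f ^ (t i - 1)) (u i)) := by
        rw [apply_apply_of_commute (hE.pow_right _), h.matrixUnit_self_apply_gen]
    _ = h.matrixUnit i i ((f ^ t i) w) := by
        rw [← hvw, map_add, LinearMap.mem_ker.1 hv, zero_add,
          ← Module.End.mul_apply (f ^ _), ← pow_succ, Nat.sub_add_cancel hi]
    _ = aeval f p ((f ^ t i) (u i)) := by
        rw [apply_apply_of_commute (hE.pow_right _), ← hp,
          apply_apply_of_commute (commute_aeval ((Commute.refl f).pow_left _) p)]
    _ = 0 := by rw [h.pow_gen, map_zero]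

lemma gen_notMem_ulmSubspace (h : IsGenTuple f u t) {i : Fin k} (hi : 1 ≤ t i) :
    u i ∉ ulmSubspace f (t i) :=
  fun hu ↦ h.gen_notMem_ker_pow_sup_range hi (ulmSubspace_le_ker_pow_sup_range f _ hu)

lemma gen_notMem_ulmSubspace_sup_map (h : IsGenTuple f u t) {i : Fin k} (hi : 1 ≤ t i)
    (Y : Submodule K V) : u i ∉ ulmSubspace f (t i) ⊔ Y.map f := fun hu ↦ by
  refine h.gen_notMem_ker_pow_sup_range hi ?_
  have hle := sup_le_sup (ulmSubspace_le_ker_pow_sup_range f (t i))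
    (LinearMap.map_le_range (f := f) (p := Y))
  rw [sup_assoc, sup_idem] at hle
  exact hle hu

lemma apply_gen_notMem_ulmSubspace_sup_map (h : IsGenTuple f u t) {r : ℕ} {j : Fin k}
    (hr : r + 1 < t j) : f (u j) ∉ ulmSubspace f r ⊔ (ulmSubspace f (t j)).map f := fun hu ↦ by
  obtain ⟨z, hz, _, ⟨w, hw, rfl⟩, hzw⟩ := Submodule.mem_sup.1 hu
  have hsub : f (u j - w) ∈ LinearMap.ker (f ^ r) := by
    rw [map_sub, ← hzw, add_sub_cancel_right]
    exact ulmSubspace_le_ker_pow f r hz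
  have hker : u j - w ∈ LinearMap.ker (f ^ (t j - 1)) :=
    Module.End.pow_map_zero_of_le (Nat.le_sub_one_of_lt hr) (apply_mem_ker_pow.1 hsub)
  exact h.gen_notMem_ulmSubspace (Nat.one_le_of_lt hr)
    (sub_add_cancel (u j) w ▸ Submodule.add_mem _ (Submodule.mem_sup_left hker) hw)

lemma exists_ne_zero_sub_smul_mem_ulmSubspace (h : IsGenTuple f u t) {i : Fin k} (hti : 1 ≤ t i)
    (hi : ∀ l, t l = t i → l = i) {α : V ≃ₗ[K] V} (hα : Commute (α : Module.End K V) f) :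
    ∃ c : K, c ≠ 0 ∧ α (u i) - c • u i ∈ ulmSubspace f (t i) := by
  have hαu : (f ^ t i) (α (u i)) = 0 :=
    hinv_ker_pow f (t i) α hα ⟨u i, h.pow_gen i, rfl⟩
  obtain ⟨c, hc⟩ := h.exists_sub_smul_mem_ulmSubspace hi hαu
  refine ⟨c, ?_, hc⟩
  rintro rfl
  rw [zero_smul, sub_zero] at hc
  refine h.gen_notMem_ulmSubspace hti ?_
  simpa using hinv_ulmSubspace f (t i) α.symm (commute_linearEquiv_symm hα) ⟨_, hc, rfl⟩

theorem not_hinv_ulmSubspace_sup_span (h : IsGenTuple f u t) {i j : Fin k} (hti : 1 ≤ t i)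
    (hij : t i + 1 < t j) :
    ¬ Hinv f (ulmSubspace f (t i) ⊔ (ulmSubspace f (t j)).map f ⊔ K ∙ (u i + f (u j))) := by
  intro hX
  have hne : j ≠ i := fun hji ↦ by simp [hji] at hij
  have hui := h.gen_notMem_ulmSubspace_sup_map hti (ulmSubspace f (t j))
  have hfuj := h.apply_gen_notMem_ulmSubspace_sup_map hij
  have hZ := (hinv_ulmSubspace f (t i)).sup (hinv_ulmSubspace f (t j)).map_self
  set Z := ulmSubspace f (t i) ⊔ (ulmSubspace f (t j)).map f
  have hmem : u i ∈ Z ⊔ K ∙ (u i + f (u j)) := by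
    refine hX _ (h.commute_matrixUnit i i)
      ⟨_, Submodule.mem_sup_right (Submodule.mem_span_singleton_self _), ?_⟩
    rw [map_add, apply_apply_of_commute (h.commute_matrixUnit i i),
      h.matrixUnit_apply_gen_of_ne i hne, map_zero, add_zero, h.matrixUnit_self_apply_gen]
  obtain ⟨z, hz, _, hspan, hzu⟩ := Submodule.mem_sup.1 hmem
  obtain ⟨c, rfl⟩ := Submodule.mem_span_singleton.1 hspan
  have hE : h.matrixUnit j j z + c • f (u j) = 0 := by
    simpa [apply_apply_of_commute (h.commute_matrixUnit j j), h.matrixUnit_self_apply_gen,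
      h.matrixUnit_apply_gen_of_ne j hne.symm] using congrArg (h.matrixUnit j j) hzu
  have hcZ : c • f (u j) ∈ Z := by
    rw [← neg_eq_of_add_eq_zero_right hE]
    exact Z.neg_mem (hZ _ (h.commute_matrixUnit j j) ⟨z, hz, rfl⟩)
  have hc : c = 0 := by
    by_contra hc
    exact hfuj ((Z.smul_mem_iff hc).1 hcZ)
  rw [hc, zero_smul, add_zero] at hzu
  exact hui (hzu ▸ hz)

end IsGenTuple

end Characteristic

section ZModTwo

variable {W : Type*} [AddCommGroup W] [Module (ZMod 2) W] {f : W →ₗ[ZMod 2] W} {k : ℕ}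
  {u : Fin k → W} {t : Fin k → ℕ}

lemma IsGenTuple.apply_sub_self_mem_ulmSubspace (h : IsGenTuple f u t) {i : Fin k}
    (hti : 1 ≤ t i) (hi : ∀ l, t l = t i → l = i) {α : W ≃ₗ[ZMod 2] W}
    (hα : Commute (α : Module.End (ZMod 2) W) f) : α (u i) - u i ∈ ulmSubspace f (t i) := by
  obtain ⟨c, hc, hmem⟩ := h.exists_ne_zero_sub_smul_mem_ulmSubspace hti hi hα
  obtain rfl : c = 1 := Fin.eq_one_of_ne_zero c hc
  rwa [one_smul] at hmem

theorem IsGenTuple.chinv_ulmSubspace_sup_span (h : IsGenTuple f u t) {i j : Fin k}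
    (hti : 1 ≤ t i) (htj : 1 ≤ t j) (hi : ∀ l, t l = t i → l = i) (hj : ∀ l, t l = t j → l = j) :
    Chinv f (ulmSubspace f (t i) ⊔ (ulmSubspace f (t j)).map f ⊔ ZMod 2 ∙ (u i + f (u j))) := by
  have hZ : Hinv f (ulmSubspace f (t i) ⊔ (ulmSubspace f (t j)).map f) :=
    (hinv_ulmSubspace f _).sup (hinv_ulmSubspace f _).map_self
  refine hZ.chinv_sup_span_singleton ?_ fun α hα ↦ ?_
  · rw [map_add]
    exact Submodule.add_mem_sup (apply_mem_ulmSubspace hti (h.pow_gen i))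
      (Submodule.mem_map_of_mem (apply_mem_ulmSubspace htj (h.pow_gen j)))
  · have hfα : α (f (u j)) = f (α (u j)) := apply_apply_of_commute hα (u j)
    rw [map_add, hfα, add_sub_add_comm, ← map_sub]
    exact Submodule.add_mem_sup (h.apply_sub_self_mem_ulmSubspace hti hi hα)
      (Submodule.mem_map_of_mem (h.apply_sub_self_mem_ulmSubspace htj hj hα))

end ZModTwo

theorem stmt18 {V : Type*} [AddCommGroup V] [Module (ZMod 2) V]
    [FiniteDimensional (ZMod 2) V] (f : V →ₗ[ZMod 2] V) (hf : IsNilpotent f) :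
    (∃ X : Submodule (ZMod 2) V, Chinv f X ∧ ¬ Hinv f X) ↔
      (∃ r s : ℕ, 1 ≤ r ∧ r + 1 < s ∧ ulm f s = 1 ∧ ulm f r = 1) := by
  constructor
  · rintro ⟨X, hX, hnot⟩
    by_contra! hulm
    exact hnot (hX.hinv_of_forall_ulm_ne_one hf hulm)
  · rintro ⟨r, s, hr, hrs, hs1, hr1⟩
    obtain ⟨k, u, t, h⟩ := exists_isGenTuple hf
    obtain ⟨i, rfl, hi⟩ := (h.ulm_eq_one_iff hr).1 hr1
    obtain ⟨j, rfl, hj⟩ := (h.ulm_eq_one_iff (by omega)).1 hs1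
    exact ⟨_, h.chinv_ulmSubspace_sup_span hr (by omega) hi hj,
      h.not_hinv_ulmSubspace_sup_span hr hrs⟩
end
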